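/- arXiv:2311.03693 — 4 statements merged into one kernel-verified Lean document; each statement's English description precedes it below -/
import Mathlib

section
/- For every finite homogeneous system of linear equations with integer coefficients in n variables (in particular, for the matching equations of normal curve/surface theory, whose equations all have the form v_i + v_j = v_k + v_l), there exist finitely many solutions F_1, …, F_k ∈ ℕ^n such that every solution w ∈ ℕ^n is a linear combination w = n_1·F_1 + … + n_k·F_k with coefficients n_1, …, n_k ∈ ℕ. Equivalently, the set of solutions is a finitely generated additive submonoid of ℕ^n. -/
/-- A vector `v ∈ ℕ^n` is a solution of the homogeneous integer linear system
given by the `m × n` integer matrix `A` if `A · v = 0` (viewing `v` inside `ℤ^n`). -/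
def IsSolution {m n : ℕ} (A : Matrix (Fin m) (Fin n) ℤ) (v : Fin n → ℕ) : Prop :=
  A.mulVec (fun i => (v i : ℤ)) = 0

/-!
If `x` and `x + y` are solutions in `ℕ^n`, then so is `y`. Hence repeatedly subtracting minimal
nonzero solutions writes every solution as a sum of these, and by Dickson's lemma there are only
finitely many of them.
-/

theorem fg_mker {M N : Type*} [AddCommMonoid M] [PartialOrder M] [WellQuasiOrderedLE M]
    [IsOrderedCancelAddMonoid M] [CanonicallyOrderedAdd M] [AddZeroClass N]
    (f : M →+ N) : (AddMonoidHom.mker f).FG := by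
  refine AddSubmonoid.fg_of_subtractive fun x hx y hxy => ?_
  rw [AddMonoidHom.mem_mker] at hx hxy ⊢
  rwa [map_add, hx, zero_add] at hxy

theorem exists_fin_generating_family_of_fg {M : Type*} [AddCommMonoid M] {P : AddSubmonoid M}
    (hP : P.FG) :
    ∃ (k : ℕ) (F : Fin k → M), (∀ i, F i ∈ P) ∧ ∀ w ∈ P, ∃ c : Fin k → ℕ, w = ∑ i, c i • F i := by
  obtain ⟨S, rfl, hS⟩ := (AddSubmonoid.fg_iff P).1 hP
  obtain ⟨k, F, rfl⟩ := hS.fin_embedding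
  exact ⟨k, F, fun i => AddSubmonoid.subset_closure (Set.mem_range_self i),
    fun w hw => AddSubmonoid.exists_of_mem_closure_range F w hw⟩

section NatMulVec

open scoped Matrix

variable {m n R : Type*} [Fintype n] [NonAssocSemiring R]

/-- The additive map `v ↦ A v` on vectors of natural numbers, whose entries are cast into the
coefficient semiring. Its kernel is the monoid of natural solutions of the system `A v = 0`. -/
def natMulVec (A : Matrix m n R) : (n → ℕ) →+ (m → R) where
  toFun v := A *ᵥ fun j => (v j : R)
  map_zero' := by simp [← Pi.zero_def]
  map_add' v w := by simp [← Matrix.mulVec_add, ← Pi.add_def]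

theorem hilbert_basis_for_matching_equations_general (A : Matrix m n R) :
    ∃ (k : ℕ) (F : Fin k → n → ℕ),
      (∀ i, A *ᵥ (fun j => (F i j : R)) = 0) ∧
      ∀ w : n → ℕ, A *ᵥ (fun j => (w j : R)) = 0 → ∃ c : Fin k → ℕ, w = ∑ i, c i • F i :=
  exists_fin_generating_family_of_fg (fg_mker (natMulVec A))

end NatMulVec

/-- Hilbert basis theorem for homogeneous integer linear systems: there are finitely
many fundamental solutions `F₁, …, F_k ∈ ℕ^n` such that every solution `w ∈ ℕ^n`
is an ℕ-linear combination `w = n₁ • F₁ + ⋯ + n_k • F_k`. -/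
theorem hilbert_basis_for_matching_equations {m n : ℕ} (A : Matrix (Fin m) (Fin n) ℤ) :
    ∃ (k : ℕ) (F : Fin k → (Fin n → ℕ)),
      (∀ i, IsSolution A (F i)) ∧
      ∀ w : Fin n → ℕ, IsSolution A w →
        ∃ c : Fin k → ℕ, w = ∑ i, c i • F i :=
  hilbert_basis_for_matching_equations_general A
end

section
/- For every m×n integer matrix A, the set of fundamental solutions of the system A·v = 0 — that is, nonzero solutions v ∈ ℕ^n that cannot be written as the sum of two nonzero solutions — is finite. -/
/-- A solution is fundamental if it is nonzero and cannot be written as the sum of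
two nonzero solutions. -/
def IsFundamental {m n : ℕ} (A : Matrix (Fin m) (Fin n) ℤ) (v : Fin n → ℕ) : Prop :=
  IsSolution A v ∧ v ≠ 0 ∧
    ¬ ∃ b c : Fin n → ℕ, IsSolution A b ∧ IsSolution A c ∧ b ≠ 0 ∧ c ≠ 0 ∧ v = b + c

/-!
If `u ≤ v` are distinct fundamental solutions, then `v - u` is a nonzero solution and
`v = u + (v - u)` decomposes `v`. So the fundamental solutions form an antichain, and `ℕ^n` has no
infinite antichain by Dickson's lemma.
-/

section Indecomposable

variable {M N : Type*} [AddMonoid M] [Preorder M] [ExistsAddOfLE M]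

theorem isAntichain_isAddIndecomposable_of_subtractive {P : Set M}
    (hP : ∀ x ∈ P, ∀ y, x + y ∈ P → y ∈ P) :
    IsAntichain (· ≤ ·) {v | v ≠ 0 ∧ IsAddIndecomposable id P v} := by
  rintro u ⟨hu_ne, hu, -⟩ v ⟨-, hv, hv_indecomposable⟩ huv hle
  obtain ⟨w, rfl⟩ := exists_add_of_le hle
  have hw : w ∈ P := hP u hu w hv
  have hw_ne : w ≠ 0 := by
    rintro rfl
    exact huv (add_zero u).symm
  exact (hv_indecomposable u hu w hw rfl).elim hu_ne hw_ne

theorem fundamental_solutions_finite_general [WellQuasiOrderedLE M] [AddZeroClass N]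
    [IsLeftCancelAdd N] (f g : M →+ N) :
    {v | v ≠ 0 ∧ IsAddIndecomposable id {x | f x = g x} v}.Finite := by
  refine WellQuasiOrderedLE.finite_of_isAntichain
    (isAntichain_isAddIndecomposable_of_subtractive fun x (hx : f x = g x) y hxy ↦ ?_)
  have hadd : g x + f y = g x + g y := by
    simpa only [Set.mem_ofPred_eq, map_add, hx] using hxy
  exact add_left_cancel hadd

end Indecomposable

section Matrix

/-- The additive map `v ↦ A · v` on vectors of natural numbers; its zeros are the solutions of the
homogeneous system given by `A`. -/
def natMulVecHom {ι κ R : Type*} [Fintype κ] [CommSemiring R] (A : Matrix ι κ R) :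
    (κ → ℕ) →+ (ι → R) :=
  A.mulVecLin.toAddMonoidHom.comp ((Nat.castAddMonoidHom R).compLeft κ)

variable {m n : ℕ} (A : Matrix (Fin m) (Fin n) ℤ) {v : Fin n → ℕ}

theorem isSolution_iff_natMulVecHom_eq_zero : IsSolution A v ↔ natMulVecHom A v = 0 :=
  Iff.rfl

theorem isFundamental_iff_isAddIndecomposable :
    IsFundamental A v ↔ v ≠ 0 ∧ IsAddIndecomposable id {x | natMulVecHom A x = 0} v := by
  simp only [IsFundamental, isSolution_iff_natMulVecHom_eq_zero, IsAddIndecomposable,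
    Set.mem_ofPred_eq, id]
  grind

end Matrix

/-- The set of fundamental solutions of a homogeneous integer linear system is finite. -/
theorem fundamental_solutions_finite {m n : ℕ} (A : Matrix (Fin m) (Fin n) ℤ) :
    {v : Fin n → ℕ | IsFundamental A v}.Finite := by
  simpa only [isFundamental_iff_isAddIndecomposable, AddMonoidHom.zero_apply] using
    fundamental_solutions_finite_general (natMulVecHom A) 0
end

section
/- For every m×n integer matrix A, every solution w ∈ ℕ^n of the system A·v = 0 can be written as a finite sum of fundamental solutions (equivalently, as an ℕ-linear combination of fundamental solutions). In particular, every normal curve or normal surface is a Haken sum of fundamental ones. -/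
/-!
The solutions form a submonoid of `ℕ^n` which is finitely generated by Gordan's lemma, and the
fundamental solutions are its irreducible elements. A finitely generated cancellative monoid whose
only unit is `0` is generated by its irreducible elements.
-/

theorem exists_fin_sum_of_mem_closure {M : Type*} [AddCommMonoid M] {s : Set M} {x : M}
    (hx : x ∈ AddSubmonoid.closure s) :
    ∃ (k : ℕ) (f : Fin k → M), (∀ i, f i ∈ s) ∧ x = ∑ i, f i := by
  obtain ⟨l, hl, rfl⟩ := AddSubmonoid.exists_list_of_mem_closure hx
  exact ⟨l.length, l.get, fun i ↦ hl _ (l.get_mem i), (Fin.sum_univ_getElem l).symm⟩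

theorem subsingleton_addUnits_addSubmonoid {M : Type*} [AddMonoid M] [Subsingleton (AddUnits M)]
    (S : AddSubmonoid M) : Subsingleton (AddUnits S) :=
  (AddUnits.map_injective (f := S.subtype) Subtype.val_injective).subsingleton

theorem addIrreducible_addSubmonoid_iff {M : Type*} [AddMonoid M] [Subsingleton (AddUnits M)]
    {S : AddSubmonoid M} {x : S} :
    AddIrreducible x ↔
      (x : M) ≠ 0 ∧ ¬ ∃ b c : M, b ∈ S ∧ c ∈ S ∧ b ≠ 0 ∧ c ≠ 0 ∧ (x : M) = b + c := by
  have := subsingleton_addUnits_addSubmonoid S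
  simp only [addIrreducible_iff, isAddUnit_iff_eq_zero, Subtype.forall, Subtype.ext_iff,
    AddSubmonoid.coe_add, AddSubmonoid.coe_zero]
  grind

theorem closure_image_subtype_addIrreducible {M : Type*} [AddCancelCommMonoid M]
    [Subsingleton (AddUnits M)] {S : AddSubmonoid M} (hS : S.FG) :
    AddSubmonoid.closure (S.subtype '' {x | AddIrreducible x}) = S := by
  have := subsingleton_addUnits_addSubmonoid S
  let _ : AddCancelCommMonoid S :=
    { S.toAddCommMonoid with add_left_cancel := fun _ _ _ ↦ add_left_cancel }
  have := (AddMonoid.fg_iff_addSubmonoid_fg S).mpr hS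
  have closure_eq_top : AddSubmonoid.closure {x : S | AddIrreducible x} = ⊤ :=
    AddSubmonoid.closure_addIrreducible
  rw [← AddMonoidHom.map_mclosure, closure_eq_top, ← AddMonoidHom.mrange_eq_map,
    AddSubmonoid.mrange_subtype]

section Solutions

variable {m n : ℕ} (A : Matrix (Fin m) (Fin n) ℤ)

/-- The additive submonoid of `ℕ^n` formed by the solutions of `A · v = 0`, encoded as the kernel
of the additive map `ℕ^n → ℤ^n → ℤ^m` so that Gordan's lemma applies to it. -/
def solutionSubmonoid : AddSubmonoid (Fin n → ℕ) :=
  AddMonoidHom.mker (A.mulVecLin.toAddMonoidHom.comp ((Nat.castAddMonoidHom ℤ).compLeft (Fin n)))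

theorem mem_solutionSubmonoid {v : Fin n → ℕ} : v ∈ solutionSubmonoid A ↔ IsSolution A v :=
  Iff.rfl

theorem solutionSubmonoid_fg : (solutionSubmonoid A).FG :=
  AddSubmonoid.fg_eqLocusM _ 0

theorem addIrreducible_iff_isFundamental {v : solutionSubmonoid A} :
    AddIrreducible v ↔ IsFundamental A v := by
  rw [addIrreducible_addSubmonoid_iff]
  exact (and_iff_right v.2).symm

theorem image_subtype_addIrreducible_solutionSubmonoid :
    (solutionSubmonoid A).subtype '' {v | AddIrreducible v} = {v | IsFundamental A v} := by
  ext v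
  constructor
  · rintro ⟨u, hu, rfl⟩
    exact (addIrreducible_iff_isFundamental A).mp hu
  · intro hv
    exact ⟨⟨v, hv.1⟩, (addIrreducible_iff_isFundamental A).mpr hv, rfl⟩

theorem closure_isFundamental :
    AddSubmonoid.closure {v | IsFundamental A v} = solutionSubmonoid A := by
  rw [← image_subtype_addIrreducible_solutionSubmonoid]
  exact closure_image_subtype_addIrreducible (solutionSubmonoid_fg A)

end Solutions

/-- Every solution of the system is a finite sum of fundamental solutions
(the Haken-sum decomposition into fundamental normal curves/surfaces). -/
theorem solution_eq_sum_of_fundamental {m n : ℕ} (A : Matrix (Fin m) (Fin n) ℤ)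
    (w : Fin n → ℕ) (hw : IsSolution A w) :
    ∃ (k : ℕ) (f : Fin k → (Fin n → ℕ)),
      (∀ i, IsFundamental A (f i)) ∧ w = ∑ i, f i := by
  have w_mem_closure : w ∈ AddSubmonoid.closure {v | IsFundamental A v} := by
    rwa [closure_isFundamental, mem_solutionSubmonoid]
  exact exists_fin_sum_of_mem_closure w_mem_closure
end

section
/- Let v₀, v₁, v₂, v₃ ∈ ℝ³ be affinely independent points and let f, g : ℝ³ → ℝ be affine maps such that f(v₀) < 0, f(v₁) < 0, f(v₂) > 0, f(v₃) > 0, while g(v₀) < 0, g(v₂) < 0, g(v₁) > 0, g(v₃) > 0. Then there exists a point x in the convex hull of {v₀, v₁, v₂, v₃} with f(x) = 0 and g(x) = 0. In other words, two flat cross-sections of a tetrahedron that separate its vertices into two different pairings must intersect inside the tetrahedron. -/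
/-!
The sections `f = 0` and `g = 0` are compared along two opposite edges. The map `g` changes sign on
each of the edges `v₀v₁` and `v₂v₃`, hence vanishes at some `p` on the first and some `q` on the
second. Since `f` does not change sign on either edge, `f p` and `f q` have opposite signs, so `f`
vanishes somewhere on the segment `pq`, along which `g` is identically zero.
-/

theorem affineMap_mem_of_mem_segment {R E F : Type*} [Ring R] [PartialOrder R]
    [AddCommGroup E] [Module R E] [AddCommGroup F] [Module R F]
    (f : E →ᵃ[R] F) {s : Set F} (hs : Convex R s) {a b x : E}
    (ha : f a ∈ s) (hb : f b ∈ s) (hx : x ∈ segment R a b) : f x ∈ s :=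
  (hs.affine_preimage f).segment_subset ha hb hx

section LinearOrderedField

variable {𝕜 E : Type*} [Field 𝕜] [LinearOrder 𝕜] [IsStrictOrderedRing 𝕜]
  [AddCommGroup E] [Module 𝕜 E]

theorem exists_mem_segment_affineMap_eq (f : E →ᵃ[𝕜] 𝕜) {a b : E} {c : 𝕜}
    (ha : f a ≤ c) (hb : c ≤ f b) : ∃ x ∈ segment 𝕜 a b, f x = c := by
  have hc : c ∈ f '' segment 𝕜 a b := by
    rw [image_segment, segment_eq_Icc (ha.trans hb)]
    exact ⟨ha, hb⟩
  exact hc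

theorem quadrilaterals_of_distinct_types_intersect_general (v : Fin 4 → E) (f g : E →ᵃ[𝕜] 𝕜)
    (hf0 : f (v 0) ≤ 0) (hf1 : f (v 1) ≤ 0) (hf2 : 0 ≤ f (v 2)) (hf3 : 0 ≤ f (v 3))
    (hg0 : g (v 0) ≤ 0) (hg2 : g (v 2) ≤ 0) (hg1 : 0 ≤ g (v 1)) (hg3 : 0 ≤ g (v 3)) :
    ∃ x ∈ convexHull 𝕜 (Set.range v), f x = 0 ∧ g x = 0 := by
  have edge_subset (i j : Fin 4) : segment 𝕜 (v i) (v j) ⊆ convexHull 𝕜 (Set.range v) :=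
    segment_subset_convexHull (Set.mem_range_self i) (Set.mem_range_self j)
  obtain ⟨p, hp, hgp⟩ := exists_mem_segment_affineMap_eq g hg0 hg1
  obtain ⟨q, hq, hgq⟩ := exists_mem_segment_affineMap_eq g hg2 hg3
  have hfp : f p ≤ 0 := affineMap_mem_of_mem_segment f (convex_Iic 0) hf0 hf1 hp
  have hfq : 0 ≤ f q := affineMap_mem_of_mem_segment f (convex_Ici 0) hf2 hf3 hq
  obtain ⟨x, hx, hfx⟩ := exists_mem_segment_affineMap_eq f hfp hfq
  have hgx : g x = 0 := affineMap_mem_of_mem_segment g (convex_singleton 0) hgp hgq hx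
  have hx_mem : x ∈ convexHull 𝕜 (Set.range v) :=
    (convex_convexHull 𝕜 _).segment_subset (edge_subset 0 1 hp) (edge_subset 2 3 hq) hx
  exact ⟨x, hx_mem, hfx, hgx⟩

end LinearOrderedField

/-- Two flat cross-sections of a tetrahedron that separate its four vertices into
two different pairings must intersect inside the tetrahedron: if `f` separates
`{v₀,v₁}` from `{v₂,v₃}` and `g` separates `{v₀,v₂}` from `{v₁,v₃}` (by signs),
then the zero sets of `f` and `g` meet in the convex hull of the vertices. -/
theorem quadrilaterals_of_distinct_types_intersect
    (v : Fin 4 → (Fin 3 → ℝ)) (hv : AffineIndependent ℝ v)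
    (f g : (Fin 3 → ℝ) →ᵃ[ℝ] ℝ)
    (hf0 : f (v 0) < 0) (hf1 : f (v 1) < 0) (hf2 : 0 < f (v 2)) (hf3 : 0 < f (v 3))
    (hg0 : g (v 0) < 0) (hg2 : g (v 2) < 0) (hg1 : 0 < g (v 1)) (hg3 : 0 < g (v 3)) :
    ∃ x ∈ convexHull ℝ (Set.range v), f x = 0 ∧ g x = 0 :=
  quadrilaterals_of_distinct_types_intersect_general v f g
    hf0.le hf1.le hf2.le hf3.le hg0.le hg2.le hg1.le hg3.le
end
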